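/- Let n ≥ 3 be an even natural number. The number of functions σ : (ZMod n) × Bool → ZMod 3, with all values in {1, 2} ⊆ ZMod 3, satisfying σ(i,false) + σ(i,true) + σ(i+1,true) + σ(i+1,false) = 0 for every i ∈ ZMod n, together with Σ_{i} σ(i,false) = 0 and Σ_{i} σ(i,true) = 0, equals (2^n + 2)/3 + 2. -/

import Mathlib

/-!
For a Heawood vector `σ` of `CL_n`, the quadrilateral equations say that the rung sums
`σ (i, false) + σ (i, true)` change sign at every step around the ladder, so either all of them
vanish or none does.

If all vanish, the second rim is the negative of the first, which is an arbitrary nowhere-zero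
vector with sum zero; character orthogonality counts these.

If none vanishes, the two rims agree, since two nonzero elements of `ZMod 3` with nonzero sum are
equal, and their common value alternates in sign. Such a vector is determined by its value at `0`
and automatically has sum zero; it exists only when `n` is even.
-/

open Finset Function

section NowhereZero

lemma addChar_map_sum {ι A M : Type*} [AddCommMonoid A] [CommMonoid M] (ψ : AddChar A M)
    (s : Finset ι) (f : ι → A) : ψ (∑ i ∈ s, f i) = ∏ i ∈ s, ψ (f i) :=
  map_prod ψ.toMonoidHom (fun i ↦ Multiplicative.ofAdd (f i)) s

variable (ι G : Type*) [Fintype ι] [AddCommGroup G]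

/-- The nowhere-zero `G`-valued vectors with sum zero, i.e. the nowhere-zero `G`-flows on two
vertices joined by parallel edges indexed by `ι`. -/
def nowhereZeroSumZero : Set (ι → G) :=
  {f | (∀ i, f i ≠ 0) ∧ ∑ i, f i = 0}

variable [Fintype G]

variable {G} in
lemma sum_addChar_compl_zero [DecidableEq G] (ψ : AddChar G ℂ) :
    ∑ a ∈ {0}ᶜ, ψ a = if ψ = 0 then (Fintype.card G : ℂ) - 1 else -1 := by
  rw [← add_sub_cancel_left (∑ a ∈ {0}, ψ a) (∑ a ∈ {0}ᶜ, ψ a), sum_add_sum_compl,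
    AddChar.sum_eq_ite]
  split_ifs <;> simp

theorem card_mul_ncard_nowhereZeroSumZero :
    (Fintype.card G * (nowhereZeroSumZero ι G).ncard : ℤ) =
      (Fintype.card G - 1) ^ Fintype.card ι + (Fintype.card G - 1) * (-1) ^ Fintype.card ι := by
  classical
  set P : Finset (ι → G) := Fintype.piFinset fun _ ↦ {0}ᶜ
  have ncard_eq : (nowhereZeroSumZero ι G).ncard = #{f ∈ P | ∑ i, f i = 0} := by
    rw [← Set.ncard_coe_finset]
    congr 1
    ext f
    simp [P, nowhereZeroSumZero]
  have orthogonality : (Fintype.card G * (nowhereZeroSumZero ι G).ncard : ℂ) =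
      (Fintype.card G - 1) ^ Fintype.card ι + (Fintype.card G - 1) * (-1) ^ Fintype.card ι :=
    calc
      _ = ∑ f ∈ P, ∑ ψ : AddChar G ℂ, ψ (∑ i, f i) := by
        simp [ncard_eq, AddChar.sum_apply_eq_ite, sum_ite, mul_comm]
      _ = ∑ ψ : AddChar G ℂ, ∑ f ∈ P, ∏ i, ψ (f i) := by
        rw [sum_comm]
        simp only [addChar_map_sum]
      _ = ∑ ψ : AddChar G ℂ, (∑ a ∈ {0}ᶜ, ψ a) ^ Fintype.card ι := by
        simp only [P, ← prod_univ_sum, prod_const, card_univ]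
      _ = _ := by
        have one_le_card : 1 ≤ Fintype.card G := Fintype.card_pos
        simp [sum_addChar_compl_zero, ite_pow, sum_ite, filter_eq', filter_ne', one_le_card]
  exact_mod_cast orthogonality

end NowhereZero

section Antiperiodic

/-- The nowhere-zero vectors on the cycle `ZMod n` whose consecutive values are opposite. -/
def nowhereZeroAlternating (n : ℕ) (G : Type*) [AddCommGroup G] : Set (ZMod n → G) :=
  {f | (∀ i, f i ≠ 0) ∧ Antiperiodic f 1}

variable {G : Type*} [AddCommGroup G]

lemma sum_eq_neg_sum_of_antiperiodic {A : Type*} [Fintype A] [AddGroup A] {f : A → G} {c : A}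
    (hf : Antiperiodic f c) : ∑ i, f i = -∑ i, f i :=
  calc
    ∑ i, f i = ∑ i, f (i + c) := (Equiv.sum_comp (Equiv.addRight c) f).symm
    _ = -∑ i, f i := by simp only [hf _, sum_neg_distrib]

variable {n : ℕ} {f : ZMod n → G}

lemma antiperiodic_one_apply (hf : Antiperiodic f 1) (i : ZMod n) :
    f i = ((i.cast : ℤ).negOnePow : ℤ) • f 0 := by
  simpa using hf.add_zsmul_eq (x := 0) i.cast

lemma antiperiodic_one_apply_eq_zero_iff (hf : Antiperiodic f 1) (i : ZMod n) :
    f i = 0 ↔ f 0 = 0 := by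
  rw [antiperiodic_one_apply hf i, ← Units.smul_def, smul_eq_zero_iff_eq]

lemma eq_neg_self_of_antiperiodic_one (hn : Odd n) (hf : Antiperiodic f 1) (i : ZMod n) :
    f i = -f i := by
  simpa [hn.neg_one_pow] using hf.add_nsmul_eq (x := i) n

lemma exists_antiperiodic_one (hn : Even n) (a : G) :
    ∃ f : ZMod n → G, Antiperiodic f 1 ∧ f 0 = a := by
  refine ⟨fun i ↦ (-1 : ℤˣ) ^ ZMod.castHom hn.two_dvd (ZMod 2) i • a, fun i ↦ ?_, ?_⟩
  · simp only [map_add, map_one, uzpow_add, uzpow_one, mul_neg_one, Units.neg_smul]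
  · simp

lemma bijOn_eval_zero_nowhereZeroAlternating (hn : Even n) :
    Set.BijOn (fun f ↦ f 0) (nowhereZeroAlternating n G) {0}ᶜ := by
  refine ⟨fun f hf ↦ hf.1 0, fun f hf g hg h ↦ ?_, fun a ha ↦ ?_⟩
  · funext i
    rw [antiperiodic_one_apply hf.2, antiperiodic_one_apply hg.2]
    exact congrArg _ h
  · obtain ⟨f, hf, rfl⟩ := exists_antiperiodic_one hn a
    exact ⟨f, ⟨fun i ↦ (antiperiodic_one_apply_eq_zero_iff hf i).not.mpr ha, hf⟩, rfl⟩

lemma ncard_nowhereZeroAlternating_of_even [Finite G] (hn : Even n) :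
    (nowhereZeroAlternating n G).ncard = Nat.card G - 1 := by
  rw [(bijOn_eval_zero_nowhereZeroAlternating hn).ncard_eq, Set.ncard_compl, Set.ncard_singleton]

lemma nowhereZeroAlternating_eq_empty_of_odd (hn : Odd n) (hG : ∀ a : G, a = -a → a = 0) :
    nowhereZeroAlternating n G = ∅ :=
  Set.eq_empty_of_forall_notMem fun _ hf ↦
    hf.1 0 (hG _ (eq_neg_self_of_antiperiodic_one hn hf.2 0))

end Antiperiodic

lemma eq_zero_of_eq_neg_zmod_three : ∀ a : ZMod 3, a = -a → a = 0 := by decide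

lemma ne_zero_iff_zmod_three : ∀ a : ZMod 3, a ≠ 0 ↔ a = 1 ∨ a = 2 := by decide

lemma eq_of_add_ne_zero_zmod_three :
    ∀ a b : ZMod 3, a ≠ 0 → b ≠ 0 → a + b ≠ 0 → b = a := by decide

section Ladder

/-- The labelling of the vertices of a ladder whose two rims `(·, false)` and `(·, true)` are
labelled by `f` and `g`. -/
def ladderLabelling {ι A : Type*} (f g : ι → A) : ι × Bool → A :=
  fun v ↦ bif v.2 then g v.1 else f v.1

lemma ladderLabelling_inj {ι A : Type*} {f g f' g' : ι → A} :
    ladderLabelling f g = ladderLabelling f' g' ↔ f = f' ∧ g = g' := by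
  simp [ladderLabelling, funext_iff, forall_and]

lemma exists_eq_ladderLabelling {ι A : Type*} (σ : ι × Bool → A) :
    ∃ f g, σ = ladderLabelling f g :=
  ⟨fun i ↦ σ (i, false), fun i ↦ σ (i, true), by ext ⟨i, _ | _⟩ <;> rfl⟩

variable (n : ℕ) [NeZero n]

/-- The Heawood vectors of the circular ladder `CL_n`, whose vertices `v_i` and `w_i` are encoded as
`(i, false)` and `(i, true)`. -/
def heawoodVectors : Set (ZMod n × Bool → ZMod 3) :=
  {σ | (∀ v, σ v = 1 ∨ σ v = 2) ∧
    (∀ i : ZMod n, σ (i, false) + σ (i, true) + σ (i + 1, true) + σ (i + 1, false) = 0) ∧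
    (∑ i : ZMod n, σ (i, false)) = 0 ∧ (∑ i : ZMod n, σ (i, true)) = 0}

variable {n}

lemma ladderLabelling_mem_heawoodVectors {f g : ZMod n → ZMod 3} :
    ladderLabelling f g ∈ heawoodVectors n ↔
      ((∀ i, f i ≠ 0) ∧ ∀ i, g i ≠ 0) ∧ Antiperiodic (f + g) 1 ∧ ∑ i, f i = 0 ∧ ∑ i, g i = 0 := by
  have quadrilateral (i : ZMod n) : f i + g i + g (i + 1) + f (i + 1) = 0 ↔
      (f + g) (i + 1) = -(f + g) i := by
    rw [eq_neg_iff_add_eq_zero, Pi.add_apply, Pi.add_apply, add_assoc (f i + g i),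
      add_comm (f i + g i), add_comm (g (i + 1))]
  simp only [heawoodVectors, Set.mem_ofPred_eq, ← ne_zero_iff_zmod_three, ladderLabelling,
    Prod.forall, Bool.forall_bool, forall_and, cond_true, cond_false, quadrilateral, Antiperiodic]

lemma ladderLabelling_neg_mem_heawoodVectors {f : ZMod n → ZMod 3} :
    ladderLabelling f (-f) ∈ heawoodVectors n ↔ f ∈ nowhereZeroSumZero (ZMod n) (ZMod 3) := by
  simp [ladderLabelling_mem_heawoodVectors, nowhereZeroSumZero, Antiperiodic]

lemma ladderLabelling_self_mem_heawoodVectors {f : ZMod n → ZMod 3} :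
    ladderLabelling f f ∈ heawoodVectors n ↔ f ∈ nowhereZeroAlternating n (ZMod 3) := by
  have add_self (a : ZMod 3) : a + a = -a := by revert a; decide
  have antiperiodic_add_self : Antiperiodic (f + f) 1 ↔ Antiperiodic f 1 := by
    simp [Antiperiodic, add_self, neg_eq_iff_eq_neg]
  have sum_eq_zero (hf : Antiperiodic f 1) : ∑ i, f i = 0 :=
    eq_zero_of_eq_neg_zmod_three _ (sum_eq_neg_sum_of_antiperiodic hf)
  simp only [ladderLabelling_mem_heawoodVectors, antiperiodic_add_self, and_self,
    and_iff_left_of_imp sum_eq_zero]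
  rfl

lemma eq_neg_or_eq_of_mem_heawoodVectors {f g : ZMod n → ZMod 3}
    (h : ladderLabelling f g ∈ heawoodVectors n) : g = -f ∨ g = f := by
  obtain ⟨⟨hf, hg⟩, rungs, -⟩ := ladderLabelling_mem_heawoodVectors.mp h
  by_cases h0 : (f + g) 0 = 0
  · exact .inl (funext fun i ↦
      eq_neg_of_add_eq_zero_right ((antiperiodic_one_apply_eq_zero_iff rungs i).mpr h0))
  · exact .inr (funext fun i ↦ eq_of_add_ne_zero_zmod_three _ _ (hf i) (hg i)
      ((antiperiodic_one_apply_eq_zero_iff rungs i).not.mpr h0))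

lemma heawoodVectors_eq_union :
    heawoodVectors n =
      (fun f ↦ ladderLabelling f (-f)) '' nowhereZeroSumZero (ZMod n) (ZMod 3) ∪
        (fun f ↦ ladderLabelling f f) '' nowhereZeroAlternating n (ZMod 3) := by
  apply Set.Subset.antisymm
  · intro σ hσ
    obtain ⟨f, g, rfl⟩ := exists_eq_ladderLabelling σ
    obtain rfl | rfl := eq_neg_or_eq_of_mem_heawoodVectors hσ
    · exact .inl ⟨f, ladderLabelling_neg_mem_heawoodVectors.mp hσ, rfl⟩
    · exact .inr ⟨_, ladderLabelling_self_mem_heawoodVectors.mp hσ, rfl⟩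
  · rintro _ (⟨f, hf, rfl⟩ | ⟨f, hf, rfl⟩)
    · exact ladderLabelling_neg_mem_heawoodVectors.mpr hf
    · exact ladderLabelling_self_mem_heawoodVectors.mpr hf

variable (n)

lemma ncard_heawoodVectors_eq_add :
    (heawoodVectors n).ncard =
      (nowhereZeroSumZero (ZMod n) (ZMod 3)).ncard + (nowhereZeroAlternating n (ZMod 3)).ncard := by
  have injective_neg : Injective fun f : ZMod n → ZMod 3 ↦ ladderLabelling f (-f) :=
    fun _ _ h ↦ (ladderLabelling_inj.mp h).1
  have injective_self : Injective fun f : ZMod n → ZMod 3 ↦ ladderLabelling f f :=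
    fun _ _ h ↦ (ladderLabelling_inj.mp h).1
  have disjoint_images :
      Disjoint ((fun f ↦ ladderLabelling f (-f)) '' nowhereZeroSumZero (ZMod n) (ZMod 3))
        ((fun f ↦ ladderLabelling f f) '' nowhereZeroAlternating n (ZMod 3)) := by
    refine Set.disjoint_left.mpr ?_
    rintro _ ⟨f, hf, rfl⟩ ⟨g, -, h⟩
    obtain ⟨rfl, hneg⟩ := ladderLabelling_inj.mp h
    exact hf.1 0 (eq_zero_of_eq_neg_zmod_three _ (congrFun hneg 0))
  rw [heawoodVectors_eq_union, Set.ncard_union_eq disjoint_images,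
    Set.ncard_image_of_injective _ injective_neg, Set.ncard_image_of_injective _ injective_self]

theorem card_heawood_circularLadder_even_general :
    (heawoodVectors n).ncard = if Even n then (2 ^ n + 2) / 3 + 2 else (2 ^ n - 2) / 3 := by
  have three_mul_ncard : (3 * (nowhereZeroSumZero (ZMod n) (ZMod 3)).ncard : ℤ) =
      2 ^ n + 2 * (-1) ^ n := by
    have h := card_mul_ncard_nowhereZeroSumZero (ZMod n) (ZMod 3)
    rw [ZMod.card, ZMod.card] at h
    exact_mod_cast h
  rw [ncard_heawoodVectors_eq_add]
  split_ifs with hn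
  · rw [hn.neg_one_pow] at three_mul_ncard
    rw [ncard_nowhereZeroAlternating_of_even hn, Nat.card_zmod]
    lia
  · rw [Nat.not_even_iff_odd] at hn
    rw [hn.neg_one_pow] at three_mul_ncard
    rw [nowhereZeroAlternating_eq_empty_of_odd hn eq_zero_of_eq_neg_zmod_three, Set.ncard_empty]
    lia

end Ladder

/-- For even `n ≥ 3`, the number of Heawood vectors of the circular ladder graph `CL_n`,
i.e. functions `σ : (ZMod n) × Bool → ZMod 3` with all values in `{1, 2}` satisfying the
propriety condition for each quadrilateral face and for the two `n`-gonal faces,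
equals `(2 ^ n + 2) / 3 + 2`. -/
theorem card_heawood_circularLadder_even (n : ℕ) [NeZero n] (hn : 3 ≤ n) (hpar : Even n) :
    Nat.card {σ : ZMod n × Bool → ZMod 3 //
      (∀ v, σ v = 1 ∨ σ v = 2) ∧
      (∀ i : ZMod n,
        σ (i, false) + σ (i, true) + σ (i + 1, true) + σ (i + 1, false) = 0) ∧
      (∑ i : ZMod n, σ (i, false)) = 0 ∧ (∑ i : ZMod n, σ (i, true)) = 0} =
    (2 ^ n + 2) / 3 + 2 :=
  (card_heawood_circularLadder_even_general n).trans (if_pos hpar)
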